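/- arXiv:2405.08687 — 5 statements merged into one kernel-verified Lean document; each statement's English description precedes it below -/
import Mathlib

section
/- Let d, m be positive integers, β₁⁰, β₂⁰ ∈ ℝ^d, and let M₁₁, M₁₂, M₂₁, M₂₂ be m×d real matrices. Let λ₁₁, λ₂₂, λ₁⁰, λ₂⁰ be real numbers with λ₁₁ + λ₂⁰ − λ₂₂ ≠ 0 and λ₂₂ + λ₁⁰ − λ₁₁ ≠ 0. Define β₁(γ) ≔ (λ₁₁ β₁⁰ + (λ₂⁰ − λ₂₂) β₂⁰)/(λ₁₁ + λ₂⁰ − λ₂₂) and β₂(γ) ≔ (λ₂₂ β₂⁰ + (λ₁⁰ − λ₁₁) β₁⁰)/(λ₂₂ + λ₁⁰ − λ₁₁), and define m(β₁, β₂) ≔ λ₁₁ M₁₁ (β₁⁰ − β₁) + (λ₂⁰ − λ₂₂) M₂₁ (β₂⁰ − β₁) + (λ₁⁰ − λ₁₁) M₁₂ (β₁⁰ − β₂) + λ₂₂ M₂₂ (β₂⁰ − β₂). Then m(β₁(γ), β₂(γ)) = (λ₁₁(λ₂⁰ − λ₂₂)/(λ₁₁ + λ₂⁰ − λ₂₂))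 (M₂₁ − M₁₁)(β₂⁰ − β₁⁰) + (λ₂₂(λ₁⁰ − λ₁₁)/(λ₂₂ + λ₁⁰ − λ₁₁)) (M₂₂ − M₁₂)(β₂⁰ − β₁⁰). -/
open Matrix

/-- **Closed form of the limit GMM moment (proof of Theorem 2).** Evaluating the limit moment
`m(β₁, β₂)` at the pseudo-true values `β₁(γ), β₂(γ)` gives the displayed combination of
`(M₂₁ − M₁₁)(β₂⁰ − β₁⁰)` and `(M₂₂ − M₁₂)(β₂⁰ − β₁⁰)`. -/
theorem statement3 (d m : ℕ) (hd : 0 < d) (hm : 0 < m)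
    (β10 β20 : Fin d → ℝ)
    (M11 M12 M21 M22 : Matrix (Fin m) (Fin d) ℝ)
    (l11 l22 l10 l20 : ℝ)
    (h1 : l11 + l20 - l22 ≠ 0) (h2 : l22 + l10 - l11 ≠ 0) :
    let β1γ : Fin d → ℝ := (l11 + l20 - l22)⁻¹ • (l11 • β10 + (l20 - l22) • β20)
    let β2γ : Fin d → ℝ := (l22 + l10 - l11)⁻¹ • (l22 • β20 + (l10 - l11) • β10)
    l11 • M11.mulVec (β10 - β1γ) + (l20 - l22) • M21.mulVec (β20 - β1γ)
      + (l10 - l11) • M12.mulVec (β10 - β2γ) + l22 • M22.mulVec (β20 - β2γ)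
      = (l11 * (l20 - l22) / (l11 + l20 - l22)) • (M21 - M11).mulVec (β20 - β10)
        + (l22 * (l10 - l11) / (l22 + l10 - l11)) • (M22 - M12).mulVec (β20 - β10) := by
  intro β1γ β2γ
  have e1 : β10 - β1γ = (-((l20 - l22) / (l11 + l20 - l22))) • (β20 - β10) := by
    funext i
    simp only [β1γ, Pi.sub_apply, Pi.smul_apply, Pi.add_apply, smul_eq_mul]
    field_simp
    ring
  have e2 : β20 - β1γ = (l11 / (l11 + l20 - l22)) • (β20 - β10) := by
    funext i
    simp only [β1γ, Pi.sub_apply, Pi.smul_apply, Pi.add_apply, smul_eq_mul]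
    field_simp
    ring
  have e3 : β10 - β2γ = (-(l22 / (l22 + l10 - l11))) • (β20 - β10) := by
    funext i
    simp only [β2γ, Pi.sub_apply, Pi.smul_apply, Pi.add_apply, smul_eq_mul]
    field_simp
    ring
  have e4 : β20 - β2γ = ((l10 - l11) / (l22 + l10 - l11)) • (β20 - β10) := by
    funext i
    simp only [β2γ, Pi.sub_apply, Pi.smul_apply, Pi.add_apply, smul_eq_mul]
    field_simp
    ring
  rw [e1, e2, e3, e4]
  simp only [Matrix.mulVec_smul, Matrix.sub_mulVec]
  funext i
  simp only [Pi.sub_apply, Pi.smul_apply, Pi.add_apply, smul_eq_mul]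
  ring
end

section
/- Let d, m be positive integers, β₁⁰, β₂⁰ ∈ ℝ^d, and let M₁, M₂ be m×d real matrices and W an m×m real matrix. Let λ₁₁, λ₂₂, λ₁⁰, λ₂⁰ be real numbers with λ₁₁ + λ₂⁰ − λ₂₂ ≠ 0 and λ₂₂ + λ₁⁰ − λ₁₁ ≠ 0. Define β₁(γ) ≔ (λ₁₁ β₁⁰ + (λ₂⁰ − λ₂₂) β₂⁰)/(λ₁₁ + λ₂⁰ − λ₂₂) and β₂(γ) ≔ (λ₂₂ β₂⁰ + (λ₁⁰ − λ₁₁) β₁⁰)/(λ₂₂ + λ₁⁰ − λ₁₁), and define the limit moment vector m(γ) ≔ λ₁₁ M₁ (β₁⁰ − β₁(γ)) + (λ₂⁰ − λ₂₂) M₂ (β₂⁰ − β₁(γ)) + (λ₁⁰ − λ₁₁) M₁ (β₁⁰ − β₂(γ)) + λ₂₂ M₂ (β₂⁰ − β₂(γ)). Then m(γ)ᵀ W m(γ) = (λ₁₁(λ₂⁰ − λ₂₂)/(λ₁₁ + λ₂⁰ − λ₂₂) + λ₂₂(λ₁⁰ − λ₁₁)/(λ₂₂ + λ₁⁰ − λ₁₁))²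 · (β₂⁰ − β₁⁰)ᵀ (M₂ − M₁)ᵀ W (M₂ − M₁)(β₂⁰ − β₁⁰). In particular, if (M₂ − M₁)(β₂⁰ − β₁⁰) = 0, then m(γ) = 0 and m(γ)ᵀ W m(γ) = 0. -/
open Matrix

/-- **Algebraic core of Theorem 2.** With `M₁₁ = M₁₂ = M₁` and `M₂₁ = M₂₂ = M₂`, the limit of
the pooled GMM objective evaluated at the pseudo-true values equals the displayed quadratic
form; in particular it vanishes (together with the limit moment itself) whenever
`(M₂ − M₁)(β₂⁰ − β₁⁰) = 0`. -/
theorem statement4 (d m : ℕ) (hd : 0 < d) (hm : 0 < m)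
    (β10 β20 : Fin d → ℝ)
    (M1 M2 : Matrix (Fin m) (Fin d) ℝ) (W : Matrix (Fin m) (Fin m) ℝ)
    (l11 l22 l10 l20 : ℝ)
    (h1 : l11 + l20 - l22 ≠ 0) (h2 : l22 + l10 - l11 ≠ 0) :
    let β1γ : Fin d → ℝ := (l11 + l20 - l22)⁻¹ • (l11 • β10 + (l20 - l22) • β20)
    let β2γ : Fin d → ℝ := (l22 + l10 - l11)⁻¹ • (l22 • β20 + (l10 - l11) • β10)
    let mγ : Fin m → ℝ :=
      l11 • M1.mulVec (β10 - β1γ) + (l20 - l22) • M2.mulVec (β20 - β1γ)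
        + (l10 - l11) • M1.mulVec (β10 - β2γ) + l22 • M2.mulVec (β20 - β2γ)
    (mγ ⬝ᵥ W.mulVec mγ
        = (l11 * (l20 - l22) / (l11 + l20 - l22) + l22 * (l10 - l11) / (l22 + l10 - l11)) ^ 2
          * (((M2 - M1).mulVec (β20 - β10)) ⬝ᵥ W.mulVec ((M2 - M1).mulVec (β20 - β10))))
    ∧ ((M2 - M1).mulVec (β20 - β10) = 0 → mγ = 0 ∧ mγ ⬝ᵥ W.mulVec mγ = 0) := by
  intro β1γ β2γ mγ
  have a1 : β10 - β1γ = (-((l20 - l22) / (l11 + l20 - l22))) • (β20 - β10) := by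
    ext i
    simp only [β1γ, Pi.sub_apply, Pi.smul_apply, Pi.add_apply, smul_eq_mul]
    field_simp
    ring
  have a2 : β20 - β1γ = (l11 / (l11 + l20 - l22)) • (β20 - β10) := by
    ext i
    simp only [β1γ, Pi.sub_apply, Pi.smul_apply, Pi.add_apply, smul_eq_mul]
    field_simp
    ring
  have a3 : β10 - β2γ = (-(l22 / (l22 + l10 - l11))) • (β20 - β10) := by
    ext i
    simp only [β2γ, Pi.sub_apply, Pi.smul_apply, Pi.add_apply, smul_eq_mul]
    field_simp
    ring
  have a4 : β20 - β2γ = ((l10 - l11) / (l22 + l10 - l11)) • (β20 - β10) := by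
    ext i
    simp only [β2γ, Pi.sub_apply, Pi.smul_apply, Pi.add_apply, smul_eq_mul]
    field_simp
    ring
  have hm : mγ = (l11 * (l20 - l22) / (l11 + l20 - l22)
      + l22 * (l10 - l11) / (l22 + l10 - l11)) • (M2 - M1).mulVec (β20 - β10) := by
    simp only [mγ]
    rw [a1, a2, a3, a4]
    simp only [Matrix.mulVec_smul, Matrix.sub_mulVec]
    ext i
    simp only [Pi.sub_apply, Pi.smul_apply, Pi.add_apply, smul_eq_mul]
    ring
  constructor
  · rw [hm]
    simp only [Matrix.mulVec_smul, smul_dotProduct, dotProduct_smul, smul_eq_mul]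
    ring
  · intro h
    have h0 : mγ = 0 := by rw [hm, h, smul_zero]
    exact ⟨h0, by rw [h0, zero_dotProduct]⟩
end

section
/- Let d, m be positive integers, β₁⁰, β₂⁰ ∈ ℝ^d, M₁, M₂ m×d real matrices, and W₁, W₂ m×m real matrices. Let λ₁₁, λ₂₂, λ₁⁰, λ₂⁰ be real numbers with λ₁₁ + λ₂⁰ − λ₂₂ ≠ 0 and λ₂₂ + λ₁⁰ − λ₁₁ ≠ 0. Define β₁(γ) ≔ (λ₁₁ β₁⁰ + (λ₂⁰ − λ₂₂) β₂⁰)/(λ₁₁ + λ₂⁰ − λ₂₂) and β₂(γ) ≔ (λ₂₂ β₂⁰ + (λ₁⁰ − λ₁₁) β₁⁰)/(λ₂₂ + λ₁⁰ − λ₁₁), and define m₁(β₁) ≔ λ₁₁ M₁ (β₁⁰ − β₁) + (λ₂⁰ − λ₂₂) M₂ (β₂⁰ − β₁) and m₂(β₂) ≔ (λ₁⁰ − λ₁₁) M₁ (β₁⁰ − β₂) + λ₂₂ M₂ (β₂⁰ − β₂). Then m₁(β₁(γ)) = (λ₁₁(λ₂⁰ − λ₂₂)/(λ₁₁ + λ₂⁰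 − λ₂₂)) (M₂ − M₁)(β₂⁰ − β₁⁰) and m₂(β₂(γ)) = (λ₂₂(λ₁⁰ − λ₁₁)/(λ₂₂ + λ₁⁰ − λ₁₁)) (M₂ − M₁)(β₂⁰ − β₁⁰), and consequently m₁(β₁(γ))ᵀ W₁ m₁(β₁(γ)) + m₂(β₂(γ))ᵀ W₂ m₂(β₂(γ)) = (λ₁₁(λ₂⁰ − λ₂₂)/(λ₁₁ + λ₂⁰ − λ₂₂))² (β₂⁰ − β₁⁰)ᵀ (M₂ − M₁)ᵀ W₁ (M₂ − M₁)(β₂⁰ − β₁⁰) + (λ₂₂(λ₁⁰ − λ₁₁)/(λ₂₂ + λ₁⁰ − λ₁₁))² (β₂⁰ − β₁⁰)ᵀ (M₂ − M₁)ᵀ W₂ (M₂ − M₁)(β₂⁰ − β₁⁰). In particular, if (M₂ − M₁)(β₂⁰ − β₁⁰) = 0, this sum is zero. -/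
open Matrix

/-- **Algebraic core of Theorem 3 (group-specific GMM objective).** The limit group-wise
moments `m₁, m₂` evaluated at the pseudo-true values equal the displayed multiples of
`(M₂ − M₁)(β₂⁰ − β₁⁰)`, the weighted objective equals the displayed sum of quadratic forms,
and in particular the sum vanishes whenever `(M₂ − M₁)(β₂⁰ − β₁⁰) = 0`. -/
theorem statement5 (d m : ℕ) (hd : 0 < d) (hm : 0 < m)
    (β10 β20 : Fin d → ℝ)
    (M1 M2 : Matrix (Fin m) (Fin d) ℝ) (W1 W2 : Matrix (Fin m) (Fin m) ℝ)
    (l11 l22 l10 l20 : ℝ)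
    (h1 : l11 + l20 - l22 ≠ 0) (h2 : l22 + l10 - l11 ≠ 0) :
    let β1γ : Fin d → ℝ := (l11 + l20 - l22)⁻¹ • (l11 • β10 + (l20 - l22) • β20)
    let β2γ : Fin d → ℝ := (l22 + l10 - l11)⁻¹ • (l22 • β20 + (l10 - l11) • β10)
    let m1 : Fin m → ℝ := l11 • M1.mulVec (β10 - β1γ) + (l20 - l22) • M2.mulVec (β20 - β1γ)
    let m2 : Fin m → ℝ := (l10 - l11) • M1.mulVec (β10 - β2γ) + l22 • M2.mulVec (β20 - β2γ)
    (m1 = (l11 * (l20 - l22) / (l11 + l20 - l22)) • (M2 - M1).mulVec (β20 - β10))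
    ∧ (m2 = (l22 * (l10 - l11) / (l22 + l10 - l11)) • (M2 - M1).mulVec (β20 - β10))
    ∧ (m1 ⬝ᵥ W1.mulVec m1 + m2 ⬝ᵥ W2.mulVec m2
        = (l11 * (l20 - l22) / (l11 + l20 - l22)) ^ 2
            * (((M2 - M1).mulVec (β20 - β10)) ⬝ᵥ W1.mulVec ((M2 - M1).mulVec (β20 - β10)))
          + (l22 * (l10 - l11) / (l22 + l10 - l11)) ^ 2
            * (((M2 - M1).mulVec (β20 - β10)) ⬝ᵥ W2.mulVec ((M2 - M1).mulVec (β20 - β10))))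
    ∧ ((M2 - M1).mulVec (β20 - β10) = 0
        → m1 ⬝ᵥ W1.mulVec m1 + m2 ⬝ᵥ W2.mulVec m2 = 0) := by
  intro β1γ β2γ m1 m2
  have e1 : m1 = (l11 * (l20 - l22) / (l11 + l20 - l22)) • (M2 - M1).mulVec (β20 - β10) := by
    ext i
    simp only [m1, β1γ, Matrix.mulVec_sub, Matrix.mulVec_add, Matrix.mulVec_smul,
      Matrix.sub_mulVec, Pi.add_apply, Pi.sub_apply, Pi.smul_apply, smul_eq_mul]
    field_simp
    ring
  have e2 : m2 = (l22 * (l10 - l11) / (l22 + l10 - l11)) • (M2 - M1).mulVec (β20 - β10) := by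
    ext i
    simp only [m2, β2γ, Matrix.mulVec_sub, Matrix.mulVec_add, Matrix.mulVec_smul,
      Matrix.sub_mulVec, Pi.add_apply, Pi.sub_apply, Pi.smul_apply, smul_eq_mul]
    field_simp
    ring
  refine ⟨e1, e2, ?_, ?_⟩
  · rw [e1, e2]
    simp only [Matrix.mulVec_smul, smul_dotProduct, dotProduct_smul, smul_eq_mul]
    ring
  · intro h
    rw [e1, e2, h]
    simp
end

section
/- Fix positive integers N, T, p, G. For each i ∈ {1,…,N} and t ∈ {1,…,T}, let x_{it} ∈ ℝ^p. Let γ⁰ = (g_1⁰,…,g_N⁰) and γ = (g_1,…,g_N) be elements of {1,…,G}^N, let β⁰, β ∈ (ℝ^p)^G, and let α⁰, α ∈ (ℝ^T)^G (write α_{g,t} for the t-th component of α_g). Define 𝐱_{it} ∈ ℝ^{p+T} as the concatenation of x_{it} with √T · e_t (e_t the t-th standard basis vector of ℝ^T); for each (g, g̃) define the (p+T)×(p+T) symmetric positive semidefinite matrix M(γ, g, g̃) ≔ (1/N) Σ_{i=1}^N 1{g_i⁰ = g} 1{g_i = g̃} (1/T) Σ_{t=1}^T 𝐱_{it} 𝐱_{it}ᵀ,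 and the vector v(g, g̃) ∈ ℝ^{p+T} as the concatenation of β_g⁰ − β_{g̃} with T^{-1/2}(α_g⁰ − α_{g̃}). Then (1/(NT)) Σ_{i=1}^N Σ_{t=1}^T (x_{it}ᵀ(β⁰_{g_i⁰} − β_{g_i}) + (α⁰_{g_i⁰,t} − α_{g_i,t}))² = Σ_{g=1}^G Σ_{g̃=1}^G v(g, g̃)ᵀ M(γ, g, g̃) v(g, g̃), and this quantity is at least Σ_{g=1}^G Σ_{g̃=1}^G ρ(γ, g, g̃) (‖β_g⁰ − β_{g̃}‖² + (1/T) Σ_{t=1}^T (α⁰_{g,t} − α_{g̃,t})²), where ρ(γ, g, g̃) is the smallest eigenvalue of M(γ, g, g̃). -/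
open Finset Matrix

theorem rayleigh_aux {n : Type*} [Fintype n] [DecidableEq n] (A : Matrix n n ℝ)
    (hA : A.IsHermitian) (v : n → ℝ) :
    sInf (spectrum ℝ A) * (v ⬝ᵥ v) ≤ v ⬝ᵥ A.mulVec v := by
  set c := sInf (spectrum ℝ A) with hc
  have hH : (A - algebraMap ℝ _ c).IsHermitian := by
    refine hA.sub ?_
    rw [Matrix.algebraMap_eq_diagonal]
    exact Matrix.isHermitian_diagonal _
  have hP : (A - algebraMap ℝ _ c).PosSemidef := by
    rw [hH.posSemidef_iff_eigenvalues_nonneg]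
    intro i
    have h1 := hH.eigenvalues_mem_spectrum_real i
    have h2 : hH.eigenvalues i + c ∈ spectrum ℝ A := by
      have := (spectrum.add_mem_add_iff (s := c)).2 h1
      simpa [add_comm] using this
    have h3 : c ≤ hH.eigenvalues i + c :=
      csInf_le (Matrix.finite_real_spectrum (A := A)).bddBelow h2
    simpa using h3
  have h := hP.dotProduct_mulVec_nonneg v
  rw [Matrix.sub_mulVec, Algebra.algebraMap_eq_smul_one, Matrix.smul_mulVec, Matrix.one_mulVec,
    dotProduct_sub, dotProduct_smul] at h
  simp only [star_trivial, smul_eq_mul] at h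
  linarith

theorem quad_aux {n ι κ : Type*} [Fintype n] [Fintype κ] (s : Finset ι) (X : ι → κ → n → ℝ)
    (a b : ℝ) (v : n → ℝ) :
    v ⬝ᵥ (a • ∑ i ∈ s, b • ∑ t, vecMulVec (X i t) (X i t)).mulVec v
      = a * ∑ i ∈ s, b * ∑ t, (X i t ⬝ᵥ v) ^ 2 := by
  simp only [Matrix.smul_mulVec, Matrix.sum_mulVec, dotProduct_smul, dotProduct_sum, smul_eq_mul,
    vecMulVec_mulVec]
  congr 1
  refine Finset.sum_congr rfl fun i _ => ?_
  congr 1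
  refine Finset.sum_congr rfl fun t _ => ?_
  simp [dotProduct_comm v, pow_two]

/-- **Quadratic-form decomposition and eigenvalue lower bound (proof of Lemma A1(b)).** The
within-sample discrepancy between true and candidate grouped parameters equals a sum of
quadratic forms in the time-augmented second-moment matrices `M(γ, g, g̃)`, and is bounded
below by the sum of the smallest eigenvalues `ρ(γ, g, g̃) = sInf (spectrum ℝ (M γ g g̃))`
times the squared parameter distances. -/
theorem statement11
    (N T p G : ℕ) (hN : 0 < N) (hT : 0 < T) (hp : 0 < p) (hG : 0 < G)
    (x : Fin N → Fin T → Fin p → ℝ)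
    (γ0 γ : Fin N → Fin G)
    (β0 β : Fin G → Fin p → ℝ)
    (α0 α : Fin G → Fin T → ℝ) :
    let X : Fin N → Fin T → (Fin p ⊕ Fin T) → ℝ :=
      fun i t => Sum.elim (x i t) (fun s => Real.sqrt T * (if s = t then 1 else 0))
    let M : Fin G → Fin G → Matrix (Fin p ⊕ Fin T) (Fin p ⊕ Fin T) ℝ :=
      fun g g' => (N : ℝ)⁻¹ •
        ∑ i ∈ univ.filter (fun i => γ0 i = g ∧ γ i = g'),
          (T : ℝ)⁻¹ • ∑ t, vecMulVec (X i t) (X i t)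
    let v : Fin G → Fin G → (Fin p ⊕ Fin T) → ℝ :=
      fun g g' => Sum.elim (β0 g - β g')
        (fun t => (Real.sqrt T)⁻¹ * (α0 g t - α g' t))
    ((↑(N * T) : ℝ)⁻¹ *
        ∑ i, ∑ t,
          (x i t ⬝ᵥ (β0 (γ0 i) - β (γ i)) + (α0 (γ0 i) t - α (γ i) t)) ^ 2
      = ∑ g, ∑ g', v g g' ⬝ᵥ (M g g').mulVec (v g g'))
    ∧ ((↑(N * T) : ℝ)⁻¹ *
        ∑ i, ∑ t,
          (x i t ⬝ᵥ (β0 (γ0 i) - β (γ i)) + (α0 (γ0 i) t - α (γ i) t)) ^ 2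
      ≥ ∑ g, ∑ g',
          sInf (spectrum ℝ (M g g')) *
            ((∑ j, (β0 g j - β g' j) ^ 2) + (T : ℝ)⁻¹ * ∑ t, (α0 g t - α g' t) ^ 2)) := by
  intro X M v
  have hT' : (0 : ℝ) < T := by exact_mod_cast hT
  have hs : Real.sqrt T ≠ 0 := (Real.sqrt_pos.2 hT').ne'
  have hXv : ∀ i t g g', X i t ⬝ᵥ v g g' = x i t ⬝ᵥ (β0 g - β g') + (α0 g t - α g' t) := by
    intro i t g g'
    simp only [X, v, dotProduct, Fintype.sum_sum_type, Sum.elim_inl, Sum.elim_inr]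
    congr 1
    rw [Finset.sum_eq_single t]
    · simp only [if_true]
      field_simp
    · intro s _ hst
      simp [hst]
    · simp
  have hvv : ∀ g g', v g g' ⬝ᵥ v g g'
      = (∑ j, (β0 g j - β g' j) ^ 2) + (T : ℝ)⁻¹ * ∑ t, (α0 g t - α g' t) ^ 2 := by
    intro g g'
    simp only [v, dotProduct, Fintype.sum_sum_type, Sum.elim_inl, Sum.elim_inr, Pi.sub_apply]
    rw [Finset.mul_sum]
    congr 1
    · exact Finset.sum_congr rfl fun j _ => by ring
    · refine Finset.sum_congr rfl fun t _ => ?_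
      have : (T : ℝ)⁻¹ = (Real.sqrt T)⁻¹ * (Real.sqrt T)⁻¹ := by
        rw [← mul_inv, Real.mul_self_sqrt hT'.le]
      rw [this]
      ring
  have hM : ∀ g g', (M g g').IsHermitian := by
    intro g g'
    ext a b
    simp [M, Matrix.sum_apply, Matrix.smul_apply, vecMulVec_apply, mul_comm]
  have heq : (↑(N * T) : ℝ)⁻¹ *
        ∑ i, ∑ t,
          (x i t ⬝ᵥ (β0 (γ0 i) - β (γ i)) + (α0 (γ0 i) t - α (γ i) t)) ^ 2
      = ∑ g, ∑ g', v g g' ⬝ᵥ (M g g').mulVec (v g g') := by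
    have h1 : ∀ g g', v g g' ⬝ᵥ (M g g').mulVec (v g g')
        = ∑ i, if γ0 i = g then (if γ i = g' then (↑(N * T) : ℝ)⁻¹ * ∑ t,
          (x i t ⬝ᵥ (β0 g - β g') + (α0 g t - α g' t)) ^ 2 else 0) else 0 := by
      intro g g'
      simp only [M]
      rw [quad_aux, Finset.sum_filter, Finset.mul_sum]
      refine Finset.sum_congr rfl fun i _ => ?_
      simp only [hXv]
      by_cases h : γ0 i = g <;> by_cases h' : γ i = g' <;> simp [h, h']
      ring
    simp only [h1]
    have h2 : ∀ g, (∑ g', ∑ i, if γ0 i = g then (if γ i = g' then (↑(N * T) : ℝ)⁻¹ * ∑ t,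
          (x i t ⬝ᵥ (β0 g - β g') + (α0 g t - α g' t)) ^ 2 else 0) else 0)
        = ∑ i, if γ0 i = g then (↑(N * T) : ℝ)⁻¹ * ∑ t,
          (x i t ⬝ᵥ (β0 g - β (γ i)) + (α0 g t - α (γ i) t)) ^ 2 else 0 := by
      intro g
      rw [Finset.sum_comm]
      refine Finset.sum_congr rfl fun i _ => ?_
      by_cases h : γ0 i = g
      · simp only [h, if_true]
        rw [Finset.sum_ite_eq]
        simp
      · simp [h]
    simp only [h2]
    rw [Finset.mul_sum]
    conv_rhs => rw [Finset.sum_comm]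
    refine Finset.sum_congr rfl fun i _ => ?_
    rw [Finset.sum_ite_eq]
    simp
  refine ⟨heq, ?_⟩
  rw [heq, ge_iff_le]
  apply Finset.sum_le_sum
  intro g _
  apply Finset.sum_le_sum
  intro g' _
  rw [← hvv]
  exact rayleigh_aux _ (hM g g') _
end

section
/- Fix positive integers N, T, q, d, K and a real number C ≥ 0. For each i ∈ {1,…,N} and t ∈ {1,…,T}, let w_{it} ∈ ℝ^q, let c_i ∈ {0, 1}, let k_i⁰ ∈ {1,…,K}, and for each k ∈ {1,…,K} and t let μ_{k,t} ∈ ℝ^d with ‖μ_{k,t}‖ ≤ C. Then, with ‖·‖ denoting the Frobenius norm of d×q matrices, ‖(1/(NT)) Σ_{i=1}^N c_i Σ_{t=1}^T μ_{k_i⁰, t} w_{it}ᵀ‖ ≤ C · Σ_{k=1}^K ((1/N²) Σ_{i=1}^N Σ_{j=1}^N |(1/T) Σ_{t=1}^T ⟨w_{it}, w_{jt}⟩|)^{1/2}. -/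
open Finset Matrix

attribute [local instance] Matrix.frobeniusNormedAddCommGroup

attribute [local instance] Matrix.frobeniusNormedSpace

lemma frob_vecMulVec {d q : ℕ} (u : Fin d → ℝ) (v : Fin q → ℝ) :
    ‖vecMulVec u v‖ = Real.sqrt (u ⬝ᵥ u) * Real.sqrt (v ⬝ᵥ v) := by
  have hu : 0 ≤ u ⬝ᵥ u := Finset.sum_nonneg fun i _ => mul_self_nonneg _
  rw [Matrix.frobenius_norm_def, ← Real.sqrt_mul hu, Real.sqrt_eq_rpow]
  congr 1
  simp only [dotProduct, Finset.sum_mul_sum, vecMulVec_apply, Real.norm_eq_abs]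
  refine Finset.sum_congr rfl fun i _ => Finset.sum_congr rfl fun j _ => ?_
  rw [Real.rpow_two, sq_abs]
  ring

lemma group_bound {N T q d : ℕ} (hN : 0 < N) (hT : 0 < T) (C : ℝ) (hC : 0 ≤ C)
    (w : Fin N → Fin T → Fin q → ℝ) (a : Fin N → ℝ) (ha : ∀ i, |a i| ≤ 1)
    (m : Fin T → Fin d → ℝ) (hm : ∀ t, Real.sqrt (m t ⬝ᵥ m t) ≤ C) :
    ‖(↑(N * T) : ℝ)⁻¹ • ∑ i, a i • ∑ t, vecMulVec (m t) (w i t)‖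
      ≤ C * Real.sqrt (((N : ℝ) ^ 2)⁻¹ * ∑ i, ∑ j, |(T : ℝ)⁻¹ * ∑ t, w i t ⬝ᵥ w j t|) := by
  have hN' : (0 : ℝ) < N := by exact_mod_cast hN
  have hT' : (0 : ℝ) < T := by exact_mod_cast hT
  set S := ∑ i, ∑ j, |(T : ℝ)⁻¹ * ∑ t, w i t ⬝ᵥ w j t| with hS
  have hS0 : 0 ≤ S := Finset.sum_nonneg fun i _ => Finset.sum_nonneg fun j _ => abs_nonneg _
  let s : Fin T → Fin q → ℝ := fun t => ∑ i, a i • w i t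
  have hs0 : ∀ t, 0 ≤ s t ⬝ᵥ s t := fun t => Finset.sum_nonneg fun i _ => mul_self_nonneg _
  have h1 : ∑ i, a i • ∑ t, vecMulVec (m t) (w i t) = ∑ t, vecMulVec (m t) (s t) := by
    simp only [Finset.smul_sum]
    rw [Finset.sum_comm]
    refine Finset.sum_congr rfl fun t _ => ?_
    ext x y
    simp only [s, Matrix.sum_apply, Matrix.smul_apply, vecMulVec_apply, Finset.sum_apply,
      Pi.smul_apply, smul_eq_mul, Finset.mul_sum]
    exact Finset.sum_congr rfl fun i _ => by ring
  have h2 : ‖∑ t, vecMulVec (m t) (s t)‖ ≤ C * ∑ t, Real.sqrt (s t ⬝ᵥ s t) := by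
    refine (norm_sum_le _ _).trans ?_
    rw [Finset.mul_sum]
    refine Finset.sum_le_sum fun t _ => ?_
    rw [frob_vecMulVec]
    exact mul_le_mul_of_nonneg_right (hm t) (Real.sqrt_nonneg _)
  have h3 : ∑ t, s t ⬝ᵥ s t ≤ T * S := by
    have e : ∑ t, s t ⬝ᵥ s t = ∑ i, ∑ j, a i * a j * ∑ t, w i t ⬝ᵥ w j t := by
      simp only [s, sum_dotProduct, dotProduct_sum, smul_dotProduct, dotProduct_smul,
        smul_eq_mul, Finset.mul_sum]
      rw [Finset.sum_comm]
      refine Finset.sum_congr rfl fun i _ => ?_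
      rw [Finset.sum_comm]
      refine Finset.sum_congr rfl fun j _ => Finset.sum_congr rfl fun t _ => ?_
      rw [dotProduct_comm (w j t)]
      ring
    rw [e, hS, Finset.mul_sum]
    refine Finset.sum_le_sum fun i _ => ?_
    rw [Finset.mul_sum]
    refine Finset.sum_le_sum fun j _ => ?_
    rw [abs_mul, abs_of_pos (inv_pos.2 hT'), mul_inv_cancel_left₀ hT'.ne']
    refine (le_abs_self _).trans ?_
    rw [abs_mul, abs_mul]
    have : |a i| * |a j| ≤ 1 := mul_le_one₀ (ha i) (abs_nonneg _) (ha j)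
    exact mul_le_of_le_one_left (abs_nonneg _) this
  have h4 : ∑ t, Real.sqrt (s t ⬝ᵥ s t) ≤ T * Real.sqrt S := by
    have h := sq_sum_le_card_mul_sum_sq (s := (Finset.univ : Finset (Fin T)))
      (f := fun t => Real.sqrt (s t ⬝ᵥ s t))
    simp only [Real.sq_sqrt (hs0 _), Finset.card_univ, Fintype.card_fin] at h
    refine abs_le_of_sq_le_sq' ?_ (by positivity) |>.2
    rw [mul_pow, Real.sq_sqrt hS0]
    nlinarith
  rw [h1, norm_smul, Real.sqrt_mul (by positivity), Real.sqrt_inv, Real.sqrt_sq hN'.le,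
    norm_inv, Real.norm_natCast, Nat.cast_mul]
  calc ((N : ℝ) * T)⁻¹ * ‖∑ t, vecMulVec (m t) (s t)‖
      ≤ ((N : ℝ) * T)⁻¹ * (C * (T * Real.sqrt S)) := by
        gcongr
        exact h2.trans (by gcongr)
    _ = C * ((N : ℝ)⁻¹ * Real.sqrt S) := by field_simp

/-- **Fixed-effect cross-moment bound (supplement to Lemma A2).** For indicator weights
`cᵢ ∈ {0,1}`, first-stage groups `k⁰ᵢ`, and uniformly bounded group fixed effects
`‖μ_{k,t}‖ ≤ C`, the Frobenius norm of the averaged cross moment is controlled by the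
pairwise absolute time-averaged inner products of the error array, summed over groups. -/
theorem statement14
    (N T q d K : ℕ) (hN : 0 < N) (hT : 0 < T) (hq : 0 < q) (hd : 0 < d) (hK : 0 < K)
    (C : ℝ) (hC : 0 ≤ C)
    (w : Fin N → Fin T → Fin q → ℝ)
    (c : Fin N → ℝ) (hc : ∀ i, c i = 0 ∨ c i = 1)
    (k0 : Fin N → Fin K)
    (μ : Fin K → Fin T → Fin d → ℝ)
    (hμ : ∀ k t, Real.sqrt (μ k t ⬝ᵥ μ k t) ≤ C) :
    ‖(↑(N * T) : ℝ)⁻¹ • ∑ i, c i • ∑ t, vecMulVec (μ (k0 i) t) (w i t)‖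
      ≤ C * ∑ _k : Fin K,
          Real.sqrt (((N : ℝ) ^ 2)⁻¹ * ∑ i, ∑ j, |(T : ℝ)⁻¹ * ∑ t, w i t ⬝ᵥ w j t|) := by
  have h : (↑(N * T) : ℝ)⁻¹ • ∑ i, c i • ∑ t, vecMulVec (μ (k0 i) t) (w i t)
      = ∑ k, (↑(N * T) : ℝ)⁻¹ • ∑ i, (if k0 i = k then c i else 0) •
          ∑ t, vecMulVec (μ k t) (w i t) := by
    rw [← Finset.smul_sum, Finset.sum_comm]
    congr 1
    refine Finset.sum_congr rfl fun i _ => ?_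
    simp [ite_smul]
  rw [h, Finset.mul_sum]
  refine (norm_sum_le _ _).trans (Finset.sum_le_sum fun k _ => ?_)
  refine group_bound hN hT C hC w _ (fun i => ?_) (μ k) (hμ k)
  split_ifs
  · rcases hc i with h | h <;> simp [h]
  · simp
end
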